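/- arXiv:2410.00554 — 2 statements merged into one kernel-verified Lean document; each statement's English description precedes it below -/
import Mathlib

section
/- Let d ≥ 2, k ≥ 2, 1 ≤ t ≤ k, let ψ ∈ ℂ^d be a unit vector with projector P = |ψ⟩⟨ψ|, let Ω = P + λ(I − P) with λ ∈ [0,1), and let σ_ε = (1−ε)P + ε(I − P)/(d−1) with ε ∈ [0,1]. With S_k the cyclic-shift unitary on (ℂ^d)^{⊗k} and D_k = (I + S_k)/2, the passing probability of the collective scheme satisfies tr[(Ω^{⊗t} ⊗ I^{⊗(k−t)}) · D_k σ_ε^{⊗k} D_k†] = (1/2)[(1 − (1−λ)ε)^t + (1−ε)^k + λ^t ε^k/(d−1)^{k−1}]. -/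
open Matrix Kronecker BigOperators

noncomputable section

/-- The cyclically previous index: `m - 1 (mod k)`. -/
def prevIdx {k : ℕ} (m : Fin k) : Fin k :=
  ⟨(m.val + (k - 1)) % k, Nat.mod_lt _ m.pos⟩

/-- The cyclic-shift unitary `S_k` on `(ℂ^d)^{⊗k}`, determined by
`S_k (v_1 ⊗ ⋯ ⊗ v_k) = v_k ⊗ v_1 ⊗ ⋯ ⊗ v_{k-1}`, written as a matrix in the
standard tensor-product basis indexed by functions `Fin k → Fin d`. -/
def cyc (d k : ℕ) : Matrix (Fin k → Fin d) (Fin k → Fin d) ℂ :=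
  fun g f => if g = fun m => f (prevIdx m) then 1 else 0

/-- The SWAP projection `D_k = (I + S_k)/2`. -/
def Dk (d k : ℕ) : Matrix (Fin k → Fin d) (Fin k → Fin d) ℂ :=
  (1 / 2 : ℂ) • (1 + cyc d k)

/-- The tensor product `A_1 ⊗ A_2 ⊗ ⋯ ⊗ A_k` of `d × d` matrices, acting
factor-wise on `(ℂ^d)^{⊗k}`. -/
def tensOp {d k : ℕ} (A : Fin k → Matrix (Fin d) (Fin d) ℂ) :
    Matrix (Fin k → Fin d) (Fin k → Fin d) ℂ :=
  fun g f => ∏ m, A m (g m) (f m)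

/-- The tensor product `v_1 ⊗ ⋯ ⊗ v_k` of vectors in `ℂ^d`. -/
def tensVec {d k : ℕ} (v : Fin k → (Fin d → ℂ)) : (Fin k → Fin d) → ℂ :=
  fun f => ∏ m, v m (f m)

/-- The partial trace over the last `k - 1` tensor factors, mapping matrices on
`(ℂ^d)^{⊗k}` to `d × d` matrices by tracing out factors `2` through `k`. -/
def ptraceFirst {d k : ℕ} (M : Matrix (Fin k → Fin d) (Fin k → Fin d) ℂ) :
    Matrix (Fin d) (Fin d) ℂ :=
  fun a b => ∑ r : {i : Fin k // i.val ≠ 0} → Fin d,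
    M (fun m => if h : m.val = 0 then a else r ⟨m, h⟩)
      (fun m => if h : m.val = 0 then b else r ⟨m, h⟩)

/-!
The shift `S = S_k` permutes the tensor factors, so it is unitary and commutes with `σ^{⊗k}`; hence
`D_k σ^{⊗k} D_k† = σ^{⊗k} (2 + S + S†) / 4`. Expanding traces over closed paths of indices turns
`tr[(A_1 ⊗ ⋯ ⊗ A_k) S†]` into `tr(A_1 ⋯ A_k)`, and the trace against `S` into that of the reversed
product. With `A_m = Ωσ` for `m ≤ t` and `A_m = σ` afterwards, the two orders have equal trace by
cyclicity, so the passing probability is `(tr(Ωσ)^t tr(σ)^{k-t} + tr((Ωσ)^t σ^{k-t})) / 2` for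
arbitrary `Ω` and `σ`. For the operators at hand everything lies in the span of the complementary
idempotents `P` and `I - P`.
-/

section PathSum

variable {ι R : Type*} [Fintype ι] [DecidableEq ι] [CommSemiring R]

theorem trace_mul_prod_ofFn {n : ℕ} (B : Matrix ι ι R) (A : Fin n → Matrix ι ι R) :
    (B * (List.ofFn A).prod).trace =
      ∑ g : Fin (n + 1) → ι,
        B (g (Fin.last n)) (g 0) * ∏ m : Fin n, A m (g m.castSucc) (g m.succ) := by
  induction n generalizing B with
  | zero =>
    rw [← (Equiv.funUnique (Fin 1) ι).symm.sum_comp]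
    simp [Matrix.trace]
  | succ n ih =>
    rw [List.ofFn_succ, List.prod_cons, ← Matrix.mul_assoc, ih,
      ← (Fin.consEquiv fun _ : Fin (n + 2) => ι).sum_comp, Fintype.sum_prod_type,
      Finset.sum_comm]
    refine Finset.sum_congr rfl fun g _ => ?_
    rw [Matrix.mul_apply, Finset.sum_mul]
    refine Finset.sum_congr rfl fun x _ => ?_
    simp only [Fin.prod_univ_succ, Fin.consEquiv_apply, Fin.cons_zero, Fin.cons_succ,
      ← Fin.succ_last, Fin.castSucc_zero, ← Fin.succ_castSucc, mul_assoc]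

theorem trace_prod_ofFn {k : ℕ} [NeZero k] (A : Fin k → Matrix ι ι R) :
    (List.ofFn A).prod.trace = ∑ g : Fin k → ι, ∏ m, A m (g m) (g (finRotate k m)) := by
  obtain ⟨n, rfl⟩ := Nat.exists_eq_succ_of_ne_zero (NeZero.ne k)
  rw [List.ofFn_succ', List.concat_eq_append, List.prod_append, List.prod_singleton,
    Matrix.trace_mul_comm, trace_mul_prod_ofFn]
  refine Finset.sum_congr rfl fun g _ => ?_
  simp only [Nat.succ_eq_add_one, Fin.prod_univ_castSucc, finRotate_apply,
    Fin.coeSucc_eq_succ, Fin.last_add_one, mul_comm]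

end PathSum

theorem ofFn_ite_lt {α : Type*} {k t : ℕ} (ht : t ≤ k) (x y : α) :
    List.ofFn (fun m : Fin k => if m.val < t then x else y) =
      List.replicate t x ++ List.replicate (k - t) y := by
  apply List.ext_getElem
  · simp [ht]
  · intro i _ _
    simp [List.getElem_append]

theorem prod_ite_lt {M : Type*} [CommMonoid M] {k t : ℕ} (ht : t ≤ k) (x y : M) :
    (∏ m : Fin k, if m.val < t then x else y) = x ^ t * y ^ (k - t) := by
  rw [← List.prod_ofFn, ofFn_ite_lt ht, List.prod_append, List.prod_replicate,
    List.prod_replicate]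

section TensorProduct

variable {d k : ℕ}

theorem tensOp_mul_tensOp (A B : Fin k → Matrix (Fin d) (Fin d) ℂ) :
    tensOp A * tensOp B = tensOp (fun m => A m * B m) := by
  ext g f
  simp only [tensOp, Matrix.mul_apply, Finset.prod_univ_sum, Fintype.piFinset_univ,
    Finset.prod_mul_distrib]

theorem trace_tensOp (A : Fin k → Matrix (Fin d) (Fin d) ℂ) :
    (tensOp A).trace = ∏ m, (A m).trace := by
  simp only [tensOp, Matrix.trace, Matrix.diag, Finset.prod_univ_sum, Fintype.piFinset_univ]

end TensorProduct

section CyclicShift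

variable {d k : ℕ}

theorem prevIdx_eq_finRotate_symm (m : Fin k) : prevIdx m = (finRotate k).symm m := by
  have := m.neZero
  rw [finRotate_symm_apply, Fin.ext_iff, Fin.val_sub, Fin.val_one', prevIdx]
  rcases (NeZero.one_le : 1 ≤ k).eq_or_lt with rfl | hk
  · simp only [Nat.mod_one]
  · rw [Nat.mod_eq_of_lt hk, add_comm (k - 1)]

theorem cyc_eq_permMatrix :
    cyc d k = Equiv.Perm.permMatrix ℂ ((finRotate k).symm.arrowCongr (Equiv.refl (Fin d))) := by
  ext g f
  have : (g = fun m => f (prevIdx m)) ↔ g ∘ finRotate k = f := by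
    rw [← Equiv.eq_comp_symm]
    simp only [prevIdx_eq_finRotate_symm, Function.comp_def]
  simp only [cyc, this, PEquiv.toMatrix_apply, Equiv.toPEquiv_apply, Option.mem_some_iff]
  rfl

theorem cyc_mul_conjTranspose_cyc : cyc d k * (cyc d k)ᴴ = 1 := by
  rw [cyc_eq_permMatrix, conjTranspose_permMatrix, ← permMatrix_mul, inv_mul_cancel,
    permMatrix_one]

theorem cyc_mul_tensOp (A : Fin k → Matrix (Fin d) (Fin d) ℂ) :
    cyc d k * tensOp A = tensOp (fun m => A (prevIdx m)) * cyc d k := by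
  ext g f
  rw [cyc_eq_permMatrix, PEquiv.toMatrix_toPEquiv_mul, PEquiv.mul_toMatrix_toPEquiv]
  simp only [submatrix_apply, tensOp, prevIdx_eq_finRotate_symm, Equiv.arrowCongr_apply,
    Equiv.arrowCongr_symm, Equiv.coe_refl, Equiv.refl_symm, Equiv.symm_symm,
    Function.comp_apply, id]
  rw [← (finRotate k).symm.prod_comp]
  simp only [Equiv.apply_symm_apply]

theorem commute_cyc_tensOp_const (A : Matrix (Fin d) (Fin d) ℂ) :
    Commute (cyc d k) (tensOp fun _ => A) :=
  cyc_mul_tensOp fun _ => A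

theorem trace_tensOp_mul_conjTranspose_cyc [NeZero k] (A : Fin k → Matrix (Fin d) (Fin d) ℂ) :
    (tensOp A * (cyc d k)ᴴ).trace = (List.ofFn A).prod.trace := by
  rw [cyc_eq_permMatrix, conjTranspose_permMatrix, PEquiv.mul_toMatrix_toPEquiv, trace_prod_ofFn]
  rfl

theorem trace_tensOp_mul_cyc [NeZero k] (A : Fin k → Matrix (Fin d) (Fin d) ℂ) :
    (tensOp A * cyc d k).trace = (List.ofFn A).reverse.prod.trace := by
  have hT : (tensOp A)ᵀ = tensOp (fun m => (A m)ᵀ) := rfl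
  have hS : (cyc d k)ᵀ = (cyc d k)ᴴ := by
    rw [cyc_eq_permMatrix, transpose_permMatrix, conjTranspose_permMatrix]
  rw [← trace_transpose, transpose_mul, trace_mul_comm, hT, hS,
    trace_tensOp_mul_conjTranspose_cyc, ← trace_transpose, transpose_list_prod, List.map_ofFn]
  rfl

end CyclicShift

theorem one_add_mul_mul_star_one_add {R : Type*} [Semiring R] [StarRing R] {u x : R}
    (hu : u * star u = 1) (hux : Commute u x) :
    (1 + u) * x * star (1 + u) = x * (2 + u + star u) := by
  have hsq : (1 + u) * star (1 + u) = 2 + u + star u := by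
    rw [star_add, star_one, add_mul, mul_add, mul_add, hu, one_mul, one_mul, mul_one,
      ← one_add_one_eq_two]
    abel
  rw [((Commute.one_left x).add_left hux).eq, mul_assoc, hsq]

section CollectiveScheme

variable {d k : ℕ}

theorem Dk_conj_of_commute {ρ : Matrix (Fin k → Fin d) (Fin k → Fin d) ℂ}
    (hρ : Commute (cyc d k) ρ) :
    Dk d k * ρ * (Dk d k)ᴴ = (1 / 4 : ℂ) • (ρ * (2 + cyc d k + (cyc d k)ᴴ)) := by
  have hscal : (1 / 2 : ℂ) * star (1 / 2 : ℂ) = 1 / 4 := by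
    rw [star_div₀, star_one, star_ofNat]
    norm_num
  rw [Dk, conjTranspose_smul, Matrix.smul_mul, smul_mul_smul_comm, hscal]
  exact congrArg _ (one_add_mul_mul_star_one_add cyc_mul_conjTranspose_cyc hρ)

theorem trace_tensOp_mul_Dk_conj [NeZero k]
    (A : Fin k → Matrix (Fin d) (Fin d) ℂ) (σ : Matrix (Fin d) (Fin d) ℂ) :
    (tensOp A * (Dk d k * tensOp (fun _ => σ) * (Dk d k)ᴴ)).trace =
      (1 / 4 : ℂ) * (2 * ∏ m, (A m * σ).trace + (List.ofFn fun m => A m * σ).reverse.prod.trace +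
        (List.ofFn fun m => A m * σ).prod.trace) := by
  rw [Dk_conj_of_commute (commute_cyc_tensOp_const σ), Matrix.mul_smul, ← Matrix.mul_assoc,
    tensOp_mul_tensOp, mul_add, mul_add, trace_smul, trace_add, trace_add, trace_tensOp_mul_cyc,
    trace_tensOp_mul_conjTranspose_cyc, mul_two, trace_add, trace_tensOp, smul_eq_mul, two_mul]

theorem trace_tensOp_ite_lt_mul_Dk_conj [NeZero k] {t : ℕ} (ht : t ≤ k)
    (Ω σ : Matrix (Fin d) (Fin d) ℂ) :
    (tensOp (fun m : Fin k => if m.val < t then Ω else 1) *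
        (Dk d k * tensOp (fun _ => σ) * (Dk d k)ᴴ)).trace =
      (1 / 2 : ℂ) * ((Ω * σ).trace ^ t * σ.trace ^ (k - t) +
        ((Ω * σ) ^ t * σ ^ (k - t)).trace) := by
  rw [trace_tensOp_mul_Dk_conj]
  simp only [ite_mul, one_mul, apply_ite Matrix.trace, prod_ite_lt ht, ofFn_ite_lt ht,
    List.reverse_append, List.reverse_replicate, List.prod_append, List.prod_replicate]
  rw [trace_mul_comm (σ ^ (k - t))]
  ring

end CollectiveScheme

section ComplementaryIdempotents

variable {R A : Type*} [CommSemiring R] [Ring A] [Algebra R A] {p : A}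

theorem smul_add_smul_one_sub_mul (hp : IsIdempotentElem p) (a b a' b' : R) :
    (a • p + b • (1 - p)) * (a' • p + b' • (1 - p)) = (a * a') • p + (b * b') • (1 - p) := by
  simp only [add_mul, mul_add, smul_mul_smul_comm, hp.eq, hp.one_sub.eq, hp.mul_one_sub_self,
    hp.one_sub_mul_self, smul_zero, add_zero, zero_add]

theorem smul_add_smul_one_sub_pow (hp : IsIdempotentElem p) (a b : R) (n : ℕ) :
    (a • p + b • (1 - p)) ^ n = a ^ n • p + b ^ n • (1 - p) := by
  induction n with
  | zero => simp
  | succ n ih => rw [pow_succ, ih, smul_add_smul_one_sub_mul hp, pow_succ, pow_succ]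

end ComplementaryIdempotents

section MatrixIdempotents

variable {ι R : Type*} [Fintype ι]

theorem trace_smul_add_smul_one_sub [DecidableEq ι] [Ring R] (P : Matrix ι ι R) (a b : R) :
    (a • P + b • (1 - P)).trace = a * P.trace + b * (Fintype.card ι - P.trace) := by
  rw [trace_add, trace_smul, trace_smul, trace_sub, trace_one, smul_eq_mul, smul_eq_mul]

theorem isIdempotentElem_vecMulVec [Semiring R] {v w : ι → R} (h : w ⬝ᵥ v = 1) :
    IsIdempotentElem (vecMulVec v w) := by
  rw [IsIdempotentElem, vecMulVec_mul_vecMulVec, h, one_smul]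

end MatrixIdempotents

theorem stmt8_general {d k t : ℕ} [NeZero k] (hd : 2 ≤ d) (ht : t ≤ k) (lam ε : ℂ)
    {P Ω σ : Matrix (Fin d) (Fin d) ℂ} (hP : IsIdempotentElem P) (hPtr : P.trace = 1)
    (hΩ : Ω = P + lam • (1 - P)) (hσ : σ = (1 - ε) • P + (ε / (d - 1)) • (1 - P)) :
    (tensOp (fun m : Fin k => if m.val < t then Ω else 1) *
        (Dk d k * tensOp (fun _ => σ) * (Dk d k)ᴴ)).trace =
      1 / 2 * ((1 - (1 - lam) * ε) ^ t + (1 - ε) ^ k + lam ^ t * ε ^ k / (d - 1) ^ (k - 1)) := by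
  have hd1 : (d : ℂ) - 1 ≠ 0 := by
    rw [sub_ne_zero]
    exact_mod_cast (by omega : d ≠ 1)
  have hΩσ : Ω * σ = (1 - ε) • P + (lam * (ε / (d - 1))) • (1 - P) := by
    have hΩ' : Ω = (1 : ℂ) • P + lam • (1 - P) := by rw [hΩ, one_smul]
    rw [hΩ', hσ, smul_add_smul_one_sub_mul hP, one_mul]
  have hprod : (Ω * σ) ^ t * σ ^ (k - t) =
      (1 - ε) ^ k • P + (lam ^ t * (ε / (d - 1)) ^ k) • (1 - P) := by
    rw [hΩσ, hσ, smul_add_smul_one_sub_pow hP, smul_add_smul_one_sub_pow hP,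
      smul_add_smul_one_sub_mul hP, mul_pow, mul_assoc, pow_mul_pow_sub _ ht, pow_mul_pow_sub _ ht]
  have hσtr : σ.trace = 1 := by
    rw [hσ, trace_smul_add_smul_one_sub, hPtr, Fintype.card_fin, div_mul_cancel₀ _ hd1]
    ring
  have hΩσtr : (Ω * σ).trace = 1 - (1 - lam) * ε := by
    rw [hΩσ, trace_smul_add_smul_one_sub, hPtr, Fintype.card_fin, mul_assoc,
      div_mul_cancel₀ _ hd1]
    ring
  have hcancel : (ε / (d - 1)) ^ k * ((d : ℂ) - 1) = ε ^ k / (d - 1) ^ (k - 1) := by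
    rw [div_pow, ← mul_pow_sub_one (NeZero.ne k) ((d : ℂ) - 1)]
    field_simp
  rw [trace_tensOp_ite_lt_mul_Dk_conj ht, hΩσtr, hσtr, hprod, trace_smul_add_smul_one_sub, hPtr,
    Fintype.card_fin, mul_assoc (lam ^ t), hcancel]
  ring

/-- passing probability of the collective scheme on `k` copies of the
white-noise state `σ_ε = (1−ε)P + ε(I−P)/(d−1)` with homogeneous verification
operator `Ω = P + λ(I−P)`:
`tr[(Ω^{⊗t} ⊗ I^{⊗(k−t)}) · D_k σ_ε^{⊗k} D_k†]
  = (1/2)[(1−(1−λ)ε)^t + (1−ε)^k + λ^t ε^k/(d−1)^{k−1}]`. -/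
theorem stmt8 (d k t : ℕ) (hd : 2 ≤ d) (hk : 2 ≤ k) (ht1 : 1 ≤ t) (ht2 : t ≤ k)
    (ψ : Fin d → ℂ) (hψ : star ψ ⬝ᵥ ψ = 1)
    (lam ε : ℝ) (hlam0 : 0 ≤ lam) (hlam1 : lam < 1) (hε0 : 0 ≤ ε) (hε1 : ε ≤ 1)
    (P Ω σ : Matrix (Fin d) (Fin d) ℂ)
    (hP : P = vecMulVec ψ (star ψ))
    (hΩ : Ω = P + (lam : ℂ) • (1 - P))
    (hσ : σ = ((1 - ε : ℝ) : ℂ) • P + ((ε / ((d : ℝ) - 1) : ℝ) : ℂ) • (1 - P)) :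
    (tensOp (fun m : Fin k => if m.val < t then Ω else 1)
        * (Dk d k * tensOp (fun _ : Fin k => σ) * (Dk d k)ᴴ)).trace
      = (1 / 2 : ℂ) * (((1 - (1 - lam) * ε) ^ t + (1 - ε) ^ k
          + lam ^ t * ε ^ k / ((d : ℝ) - 1) ^ (k - 1) : ℝ) : ℂ) := by
  have : NeZero k := ⟨by omega⟩
  push_cast at hσ ⊢
  exact stmt8_general hd ht2 lam ε (hP ▸ isIdempotentElem_vecMulVec hψ)
    (by rw [hP, trace_vecMulVec, dotProduct_comm, hψ]) hΩ hσ
end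
end

section
/- Let d ≥ 2, k ≥ 2, 1 ≤ t ≤ k−1, let ψ, ψ⊥ ∈ ℂ^d be orthonormal vectors, let Ω = |ψ⟩⟨ψ| + λ(I − |ψ⟩⟨ψ|) with λ ∈ [0,1), let 0 ≤ ε ≤ 1/k with (1−λ)tε < 1, and define φ' = (1/√k) Σ_{m=1}^{k} ψ^{⊗(m−1)} ⊗ ψ⊥ ⊗ ψ^{⊗(k−m)} and φ = √(1−kε)·ψ^{⊗k} + √(kε)·φ'. With P = |ψ⟩⟨ψ|, the conditional fidelity of an unmeasured copy, F = tr[(Ω^{⊗t} ⊗ I^{⊗(k−t−1)} ⊗ P) |φ⟩⟨φ|] / tr[(Ω^{⊗t} ⊗ I^{⊗(k−t)}) |φ⟩⟨φ|], satisfies F = 1 − ε/(1 − (1−λ)tε); equivalently, the conditional infidelity equals ε/(1 − (1−λ)tε), which is strictly greater than ε whenever ε > 0 and t ≥ 1. -/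
open Matrix Kronecker BigOperators

noncomputable section

/-!
The vectors `ψ^{⊗k}` and `ψ^{⊗(m-1)} ⊗ ψ⊥ ⊗ ψ^{⊗(k-m)}` are orthonormal, and they are eigenvectors
of any product operator `A_1 ⊗ ⋯ ⊗ A_k` whose factors satisfy `A_m ψ = ψ` and `A_m ψ⊥ = c_m ψ⊥`:
the eigenvalues are `1` and `c_m`. Their weights in `φ` are `1 - kε` and `ε`, so
`⟨φ| A_1 ⊗ ⋯ ⊗ A_k |φ⟩ = 1 - ε ∑ (1 - c_m)`: a tested copy costs `(1 - λ)ε`, an untouched copy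
nothing, and the projection `P` costs `ε`. The fidelity is the quotient of two such values.
-/

section Counting

variable {ι R : Type*} [Fintype ι] [DecidableEq ι] [Ring R]

theorem sum_one_sub_ite_mem (S : Finset ι) (x : R) :
    ∑ m, (1 - if m ∈ S then x else 1) = (1 - x) * S.card := by
  have hterm (m : ι) : (1 - if m ∈ S then x else 1) = if m ∈ S then 1 - x else 0 := by
    split_ifs <;> simp
  rw [Finset.sum_congr rfl fun m _ => hterm m, Fintype.sum_ite_mem, Finset.sum_const,
    nsmul_eq_mul']

theorem sum_one_sub_ite_mem_ite_eq {S : Finset ι} {j : ι} (hj : j ∉ S) (x : R) :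
    ∑ m, (1 - if m ∈ S then x else if m = j then 0 else 1) = (1 - x) * S.card + 1 := by
  have hterm (m : ι) : (1 - if m ∈ S then x else if m = j then 0 else 1) =
      (1 - if m ∈ S then x else 1) + if m = j then 1 else 0 := by
    split_ifs <;> simp_all
  rw [Finset.sum_congr rfl fun m _ => hterm m, Finset.sum_add_distrib, sum_one_sub_ite_mem,
    Fintype.sum_ite_eq']

end Counting

section RankOne

variable {n R : Type*} [Fintype n] [Semiring R] [Star R] {ψ ψp : n → R}

theorem vecMulVec_star_mulVec_self (hψ : star ψ ⬝ᵥ ψ = 1) : vecMulVec ψ (star ψ) *ᵥ ψ = ψ := by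
  rw [vecMulVec_mulVec, hψ, MulOpposite.op_one, one_smul]

theorem vecMulVec_star_mulVec_of_orthogonal (horth : star ψ ⬝ᵥ ψp = 0) :
    vecMulVec ψ (star ψ) *ᵥ ψp = 0 := by
  rw [vecMulVec_mulVec, horth, MulOpposite.op_zero, zero_smul]

end RankOne

section Expectation

variable {n R : Type*} [Fintype n] [CommSemiring R]

theorem trace_mul_vecMulVec (M : Matrix n n R) (u v : n → R) :
    (M * vecMulVec u v).trace = v ⬝ᵥ M *ᵥ u := by
  rw [mul_vecMulVec, trace_vecMulVec, dotProduct_comm]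

theorem star_dotProduct_mulVec_sum_smul_of_orthonormal [StarRing R] {ι : Type*} [Fintype ι]
    [DecidableEq ι] {M : Matrix n n R} {e : ι → n → R} {c : ι → R}
    (he : ∀ i j, star (e i) ⬝ᵥ e j = if i = j then 1 else 0)
    (hM : ∀ i, M *ᵥ e i = c i • e i) (a : ι → R) :
    star (∑ i, a i • e i) ⬝ᵥ M *ᵥ ∑ i, a i • e i = ∑ i, star (a i) * a i * c i := by
  simp only [mulVec_sum, mulVec_smul, hM, star_sum, star_smul, sum_dotProduct, dotProduct_sum,
    smul_dotProduct, dotProduct_smul, he, smul_eq_mul, mul_ite, mul_one, mul_zero,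
    Finset.sum_ite_eq', Finset.mem_univ, if_true]
  exact Finset.sum_congr rfl fun i _ => by ring

end Expectation

section TensorProduct

variable {d k : ℕ}

theorem tensOp_mulVec_tensVec (A : Fin k → Matrix (Fin d) (Fin d) ℂ) (v : Fin k → Fin d → ℂ) :
    tensOp A *ᵥ tensVec v = tensVec fun m => A m *ᵥ v m := by
  funext g
  simp only [tensOp, tensVec, mulVec, dotProduct, Fintype.prod_sum, Finset.prod_mul_distrib]

theorem star_tensVec_dotProduct_tensVec (u v : Fin k → Fin d → ℂ) :
    star (tensVec u) ⬝ᵥ tensVec v = ∏ m, star (u m) ⬝ᵥ v m := by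
  simp only [tensVec, dotProduct, Pi.star_apply, star_prod, Fintype.prod_sum,
    Finset.prod_mul_distrib]

theorem tensVec_smul (a : Fin k → ℂ) (v : Fin k → Fin d → ℂ) :
    tensVec (fun m => a m • v m) = (∏ m, a m) • tensVec v := by
  funext g
  simp only [tensVec, Pi.smul_apply, smul_eq_mul, Finset.prod_mul_distrib]

end TensorProduct

section Excitation

variable {d k : ℕ} {ψ ψp : Fin d → ℂ}

/-- The product vector on `k` copies with `ψp` in the factors of `S` and `ψ` in all others. -/
def excitation (ψ ψp : Fin d → ℂ) (S : Finset (Fin k)) : (Fin k → Fin d) → ℂ :=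
  tensVec fun i => if i ∈ S then ψp else ψ

theorem star_excitation_dotProduct_excitation (hψ : star ψ ⬝ᵥ ψ = 1) (hψp : star ψp ⬝ᵥ ψp = 1)
    (horth : star ψ ⬝ᵥ ψp = 0) (S T : Finset (Fin k)) :
    star (excitation ψ ψp S) ⬝ᵥ excitation ψ ψp T = if S = T then 1 else 0 := by
  have horth' : star ψp ⬝ᵥ ψ = 0 := by rw [star_dotProduct, horth, star_zero]
  rw [excitation, excitation, star_tensVec_dotProduct_tensVec]
  split_ifs with hST
  · subst hST
    refine Finset.prod_eq_one fun i _ => ?_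
    split_ifs <;> assumption
  · obtain ⟨i, hi⟩ : ∃ i, ¬(i ∈ S ↔ i ∈ T) := by simpa only [Finset.ext_iff, not_forall] using hST
    refine Finset.prod_eq_zero (Finset.mem_univ i) ?_
    split_ifs <;> first | assumption | tauto

theorem tensOp_mulVec_excitation {A : Fin k → Matrix (Fin d) (Fin d) ℂ} {c : Fin k → ℂ}
    (hA : ∀ m, A m *ᵥ ψ = ψ) (hAp : ∀ m, A m *ᵥ ψp = c m • ψp) (S : Finset (Fin k)) :
    tensOp A *ᵥ excitation ψ ψp S = (∏ m ∈ S, c m) • excitation ψ ψp S := by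
  have hfactor (m : Fin k) : A m *ᵥ (if m ∈ S then ψp else ψ) =
      (if m ∈ S then c m else 1) • if m ∈ S then ψp else ψ := by
    split_ifs
    · exact hAp m
    · rw [hA, one_smul]
  rw [excitation, tensOp_mulVec_tensVec, funext hfactor, tensVec_smul, Finset.prod_ite_mem,
    Finset.univ_inter]

end Excitation

section WorstCase

variable {d k : ℕ} {ψ ψp : Fin d → ℂ} {ε : ℝ}

/-- The state `φ = √(1 - kε) ψ^{⊗k} + √(kε) φ'` of `k` copies, with `φ'` the normalized
superposition of the `k` single excitations: the worst case of a global unitary control. -/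
def worstCaseState (k : ℕ) (ψ ψp : Fin d → ℂ) (ε : ℝ) : (Fin k → Fin d) → ℂ :=
  ((√(1 - k * ε) : ℝ) : ℂ) • tensVec (fun _ => ψ) +
    ((√(k * ε) : ℝ) : ℂ) • ((√k : ℝ) : ℂ)⁻¹ • ∑ m : Fin k, tensVec fun i => if i = m then ψp else ψ

theorem worstCaseState_eq_sum_excitation (hk : k ≠ 0) :
    worstCaseState k ψ ψp ε =
      ∑ o : Option (Fin k), o.elim ((√(1 - k * ε) : ℝ) : ℂ) (fun _ => ((√ε : ℝ) : ℂ)) •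
        excitation ψ ψp o.toFinset := by
  have hsqrt : √(k * ε) * (√k)⁻¹ = √ε := by
    rw [Real.sqrt_mul k.cast_nonneg, mul_comm, inv_mul_cancel_left₀]
    exact Real.sqrt_ne_zero'.2 (by positivity)
  rw [worstCaseState, smul_smul, ← Complex.ofReal_inv, ← Complex.ofReal_mul, hsqrt,
    Finset.smul_sum, Fintype.sum_option]
  simp only [excitation, Option.elim_none, Option.elim_some, Option.toFinset_none,
    Option.toFinset_some, Finset.notMem_empty, Finset.mem_singleton, if_false]

theorem trace_tensOp_mul_worstCaseState (hk : k ≠ 0) (hψ : star ψ ⬝ᵥ ψ = 1)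
    (hψp : star ψp ⬝ᵥ ψp = 1) (horth : star ψ ⬝ᵥ ψp = 0) (hε0 : 0 ≤ ε) (hε1 : ε ≤ 1 / k)
    {A : Fin k → Matrix (Fin d) (Fin d) ℂ} {c : Fin k → ℂ}
    (hA : ∀ m, A m *ᵥ ψ = ψ) (hAp : ∀ m, A m *ᵥ ψp = c m • ψp) :
    (tensOp A * vecMulVec (worstCaseState k ψ ψp ε) (star (worstCaseState k ψ ψp ε))).trace =
      1 - ε * ∑ m, (1 - c m) := by
  have hkε : 0 ≤ 1 - k * ε := by
    rw [le_div_iff₀' (by positivity)] at hε1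
    exact sub_nonneg.2 hε1
  have horthonormal (o o' : Option (Fin k)) :
      star (excitation ψ ψp o.toFinset) ⬝ᵥ excitation ψ ψp o'.toFinset =
        if o = o' then 1 else 0 := by
    rw [star_excitation_dotProduct_excitation hψ hψp horth]
    have hinj : o.toFinset = o'.toFinset ↔ o = o' := by
      rw [Option.ext_iff]
      simp only [Finset.ext_iff, Option.mem_toFinset, Option.mem_def]
    simp only [hinj]
  have hweight {x : ℝ} (hx : 0 ≤ x) : star ((√x : ℝ) : ℂ) * ((√x : ℝ) : ℂ) = x := by
    rw [Complex.star_def, Complex.conj_ofReal, ← Complex.ofReal_mul, Real.mul_self_sqrt hx]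
  rw [trace_mul_vecMulVec, worstCaseState_eq_sum_excitation hk,
    star_dotProduct_mulVec_sum_smul_of_orthonormal horthonormal
      fun o => tensOp_mulVec_excitation hA hAp o.toFinset, Fintype.sum_option]
  simp only [Option.elim_none, Option.elim_some, Option.toFinset_none, Option.toFinset_some,
    Finset.prod_empty, Finset.prod_singleton, hweight hkε, hweight hε0, ← Finset.mul_sum,
    Finset.sum_sub_distrib, Finset.sum_const, Finset.card_univ, Fintype.card_fin, nsmul_eq_mul]
  push_cast
  ring

end WorstCase

section ConditionalFidelity

variable {d k : ℕ} {ψ ψp : Fin d → ℂ}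

/-- The homogeneous verification operator `Ω` of the target `ψ`, with second eigenvalue `lam`. -/
def homogeneousTest (ψ : Fin d → ℂ) (lam : ℂ) : Matrix (Fin d) (Fin d) ℂ :=
  vecMulVec ψ (star ψ) + lam • (1 - vecMulVec ψ (star ψ))

theorem homogeneousTest_mulVec_self (hψ : star ψ ⬝ᵥ ψ = 1) (lam : ℂ) :
    homogeneousTest ψ lam *ᵥ ψ = ψ := by
  rw [homogeneousTest, add_mulVec, smul_mulVec, sub_mulVec, vecMulVec_star_mulVec_self hψ,
    one_mulVec, sub_self, smul_zero, add_zero]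

theorem homogeneousTest_mulVec_of_orthogonal (horth : star ψ ⬝ᵥ ψp = 0) (lam : ℂ) :
    homogeneousTest ψ lam *ᵥ ψp = lam • ψp := by
  rw [homogeneousTest, add_mulVec, smul_mulVec, sub_mulVec,
    vecMulVec_star_mulVec_of_orthogonal horth, one_mulVec, sub_zero, zero_add]

/-- The fidelity with `ψ` of copy `j` of the state `φ`, conditioned on every copy in `S` passing
the test `Ω`. Meaningful for `j ∉ S`: otherwise `Ω` rather than the projection on `ψ` acts on
copy `j`. -/
def conditionalFidelity (S : Finset (Fin k)) (j : Fin k) (ψ : Fin d → ℂ)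
    (Ω : Matrix (Fin d) (Fin d) ℂ) (φ : (Fin k → Fin d) → ℂ) : ℂ :=
  (tensOp (fun m => if m ∈ S then Ω else if m = j then vecMulVec ψ (star ψ) else 1) *
      vecMulVec φ (star φ)).trace /
    (tensOp (fun m => if m ∈ S then Ω else 1) * vecMulVec φ (star φ)).trace

theorem conditionalFidelity_worstCaseState {S : Finset (Fin k)} {j : Fin k} (hj : j ∉ S)
    (hψ : star ψ ⬝ᵥ ψ = 1) (hψp : star ψp ⬝ᵥ ψp = 1) (horth : star ψ ⬝ᵥ ψp = 0)
    {ε : ℝ} (hε0 : 0 ≤ ε) (hε1 : ε ≤ 1 / k) {Ω : Matrix (Fin d) (Fin d) ℂ} {lam : ℂ}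
    (hΩψ : Ω *ᵥ ψ = ψ) (hΩψp : Ω *ᵥ ψp = lam • ψp) (hpass : 1 - (1 - lam) * S.card * ε ≠ 0) :
    conditionalFidelity S j ψ Ω (worstCaseState k ψ ψp ε) =
      1 - ε / (1 - (1 - lam) * S.card * ε) := by
  have hk : k ≠ 0 := j.pos.ne'
  have hnum := trace_tensOp_mul_worstCaseState hk hψ hψp horth hε0 hε1
    (A := fun m => if m ∈ S then Ω else if m = j then vecMulVec ψ (star ψ) else 1)
    (c := fun m => if m ∈ S then lam else if m = j then 0 else 1)
    (fun m => by split_ifs <;> simp [hΩψ, vecMulVec_star_mulVec_self hψ])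
    (fun m => by split_ifs <;> simp [hΩψp, vecMulVec_star_mulVec_of_orthogonal horth])
  have hden := trace_tensOp_mul_worstCaseState hk hψ hψp horth hε0 hε1
    (A := fun m => if m ∈ S then Ω else 1) (c := fun m => if m ∈ S then lam else 1)
    (fun m => by split_ifs <;> simp [hΩψ])
    (fun m => by split_ifs <;> simp [hΩψp])
  rw [conditionalFidelity, hnum, hden, sum_one_sub_ite_mem_ite_eq hj, sum_one_sub_ite_mem,
    mul_comm (ε : ℂ) (_ * _), eq_sub_iff_add_eq, ← add_div, div_eq_one_iff_eq hpass]
  ring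

theorem stmt18_general {S : Finset (Fin k)} (hS : S.Nonempty) {j : Fin k} (hj : j ∉ S)
    (hψ : star ψ ⬝ᵥ ψ = 1) (hψp : star ψp ⬝ᵥ ψp = 1) (horth : star ψ ⬝ᵥ ψp = 0)
    {lam ε : ℝ} (hlam : lam < 1) (hε0 : 0 ≤ ε) (hε1 : ε ≤ 1 / k)
    (hsmall : (1 - lam) * S.card * ε < 1) {Ω : Matrix (Fin d) (Fin d) ℂ}
    (hΩψ : Ω *ᵥ ψ = ψ) (hΩψp : Ω *ᵥ ψp = (lam : ℂ) • ψp) :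
    conditionalFidelity S j ψ Ω (worstCaseState k ψ ψp ε) =
        ((1 - ε / (1 - (1 - lam) * S.card * ε) : ℝ) : ℂ) ∧
      (0 < ε → ε < ε / (1 - (1 - lam) * S.card * ε)) := by
  have hpass : 0 < 1 - (1 - lam) * S.card * ε := sub_pos.2 hsmall
  constructor
  · rw [conditionalFidelity_worstCaseState hj hψ hψp horth hε0 hε1 hΩψ hΩψp
      (by exact_mod_cast hpass.ne')]
    push_cast
    rfl
  · intro hε
    have hloss : 0 < (1 - lam) * S.card * ε :=
      mul_pos (mul_pos (sub_pos.2 hlam) (Nat.cast_pos.2 hS.card_pos)) hε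
    rw [lt_div_iff₀ hpass]
    exact mul_lt_of_lt_one_right hε (sub_lt_self 1 hloss)

end ConditionalFidelity

/-- under worst-case global unitary control the conditional fidelity
of an unmeasured copy,
`F = tr[(Ω^{⊗t} ⊗ I^{⊗(k−t−1)} ⊗ P)|φ⟩⟨φ|] / tr[(Ω^{⊗t} ⊗ I^{⊗(k−t)})|φ⟩⟨φ|]`,
satisfies `F = 1 − ε/(1 − (1−λ)tε)`; the conditional infidelity `ε/(1 − (1−λ)tε)`
is strictly greater than `ε` whenever `ε > 0` (and `t ≥ 1`). -/
theorem stmt18 (d k t : ℕ) (hd : 2 ≤ d) (hk : 2 ≤ k) (ht1 : 1 ≤ t) (ht2 : t ≤ k - 1)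
    (ψ ψp : Fin d → ℂ) (hψ : star ψ ⬝ᵥ ψ = 1) (hψp : star ψp ⬝ᵥ ψp = 1)
    (horth : star ψ ⬝ᵥ ψp = 0)
    (lam ε : ℝ) (hlam0 : 0 ≤ lam) (hlam1 : lam < 1)
    (hε0 : 0 ≤ ε) (hε1 : ε ≤ 1 / (k : ℝ)) (hsmall : (1 - lam) * t * ε < 1)
    (P Ω : Matrix (Fin d) (Fin d) ℂ)
    (hP : P = vecMulVec ψ (star ψ))
    (hΩ : Ω = P + (lam : ℂ) • (1 - P))
    (φ' φ : (Fin k → Fin d) → ℂ)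
    (hφ' : φ' = (((Real.sqrt k : ℝ) : ℂ))⁻¹
        • ∑ m : Fin k, tensVec (fun i : Fin k => if i = m then ψp else ψ))
    (hφ : φ = ((Real.sqrt (1 - k * ε) : ℝ) : ℂ) • tensVec (fun _ : Fin k => ψ)
        + ((Real.sqrt (k * ε) : ℝ) : ℂ) • φ')
    (F : ℂ)
    (hF : F = (tensOp (fun m : Fin k =>
          if m.val < t then Ω else if m.val = k - 1 then P else 1)
            * vecMulVec φ (star φ)).trace
        / (tensOp (fun m : Fin k => if m.val < t then Ω else 1)
            * vecMulVec φ (star φ)).trace) :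
    F = ((1 - ε / (1 - (1 - lam) * t * ε) : ℝ) : ℂ) ∧
    (0 < ε → ε < ε / (1 - (1 - lam) * t * ε)) := by
  subst hF hφ hφ' hΩ hP
  simpa [conditionalFidelity, worstCaseState, homogeneousTest, Fin.ext_iff, Fin.lt_def] using
    stmt18_general (S := Finset.Iio ⟨t, by omega⟩) (j := ⟨k - 1, by omega⟩)
      ⟨⟨0, by omega⟩, Finset.mem_Iio.2 ht1⟩ (fun h => (Finset.mem_Iio.1 h).not_ge ht2)
      hψ hψp horth hlam1 hε0 hε1 (by simpa using hsmall)
      (homogeneousTest_mulVec_self hψ lam) (homogeneousTest_mulVec_of_orthogonal horth lam)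
end
end
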